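/- Let V be a vertex operator algebra and W a weak V-module. Then (D(W), Y*) is itself a weak V-module; moreover it is the maximal weak V-module contained in W* with vertex operator map Y*. -/

import Mathlib

noncomputable section

/-- The generalized binomial coefficient `C(m, i)` for `m ∈ ℤ`, `i ∈ ℕ`,
as a complex number: `m(m-1)⋯(m-i+1)/i!`. -/
def cchoose (m : ℤ) (i : ℕ) : ℂ :=
  (∏ j ∈ Finset.range i, ((m : ℂ) - (j : ℂ))) / (Nat.factorial i : ℂ)

/-- A vertex operator algebra `V = ⊕ₙ V₍ₙ₎` over `ℂ`.  The vertex operator map is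
recorded through its modes `op u n v = uₙ v` (so `Y(u,x)v = Σₙ uₙv x^{-n-1}`), with
vacuum `one`, conformal vector `omega` (with `L(k) = ω_{k+1}`), central charge `cc`,
weight grading `wtSpace` with projections `proj`.  The Jacobi identity is recorded in
the equivalent form of the Borcherds identity on modes. -/
structure VOA where
  carrier : Type
  [grp : AddCommGroup carrier]
  [mdl : Module ℂ carrier]
  op : carrier → ℤ → carrier → carrier
  one : carrier
  omega : carrier
  wtSpace : ℤ → Submodule ℂ carrier
  proj : ℤ → carrier → carrier
  cc : ℂ
  op_linear_left : ∀ (n : ℤ) (w : carrier), IsLinearMap ℂ fun u => op u n w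
  op_linear_right : ∀ (u : carrier) (n : ℤ), IsLinearMap ℂ (op u n)
  trunc : ∀ u v : carrier, ∃ N : ℤ, ∀ n : ℤ, N ≤ n → op u n v = 0
  one_op : ∀ (n : ℤ) (v : carrier), op one n v = if n = -1 then v else 0
  create_nonneg : ∀ (v : carrier) (n : ℤ), 0 ≤ n → op v n one = 0
  create : ∀ v : carrier, op v (-1) one = v
  borcherds : ∀ (u v w : carrier) (l m n : ℤ),
    (∑ᶠ i : ℕ, cchoose m i • op (op u (l + (i : ℤ)) v) (m + n - (i : ℤ)) w)
      = ∑ᶠ i : ℕ, ((-1 : ℂ) ^ i * cchoose l i) •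
          (op u (l + m - (i : ℤ)) (op v (n + (i : ℤ)) w)
            - ((-1 : ℂ) ^ l) • op v (l + n - (i : ℤ)) (op u (m + (i : ℤ)) w))
  proj_linear : ∀ n : ℤ, IsLinearMap ℂ (proj n)
  proj_mem : ∀ (n : ℤ) (v : carrier), proj n v ∈ wtSpace n
  proj_eq : ∀ n : ℤ, ∀ v ∈ wtSpace n, proj n v = v
  proj_ne : ∀ m n : ℤ, m ≠ n → ∀ v ∈ wtSpace m, proj n v = 0
  proj_finite : ∀ v : carrier, (Function.support fun n => proj n v).Finite
  proj_sum : ∀ v : carrier, (∑ᶠ n : ℤ, proj n v) = v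
  fd : ∀ n : ℤ, FiniteDimensional ℂ (wtSpace n)
  lower_trunc : ∃ N : ℤ, ∀ n : ℤ, n < N → wtSpace n = ⊥
  one_wt : one ∈ wtSpace 0
  omega_wt : omega ∈ wtSpace 2
  op_wt : ∀ k m n : ℤ, ∀ u ∈ wtSpace k, ∀ v ∈ wtSpace m, op u n v ∈ wtSpace (k + m - n - 1)
  L_zero : ∀ n : ℤ, ∀ v ∈ wtSpace n, op omega 1 v = (n : ℂ) • v
  L_neg_one : ∀ (u : carrier) (n : ℤ) (w : carrier),
    op (op omega 0 u) n w = (-(n : ℂ)) • op u (n - 1) w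
  virasoro : ∀ (m n : ℤ) (v : carrier),
    op omega (m + 1) (op omega (n + 1) v) - op omega (n + 1) (op omega (m + 1) v)
      = ((m : ℂ) - (n : ℂ)) • op omega (m + n + 1) v
        + (if m + n = 0 then (((m : ℂ) ^ 3 - (m : ℂ)) / 12) * cc else 0) • v

attribute [instance] VOA.grp VOA.mdl

namespace VOA

variable (V : VOA)

/-- The Virasoro operator `L(k) = ω_{k+1}`. -/
def L (k : ℤ) (v : V.carrier) : V.carrier := V.op V.omega (k + 1) v

/-- The positive-weight part `V₊ = ⊕_{n ≥ 1} V₍ₙ₎`. -/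
def pos : Submodule ℂ V.carrier := ⨆ (n : ℤ) (_ : 1 ≤ n), V.wtSpace n

/-- Zhu's subspace `C₂(V) = span{u₋₂v : u, v ∈ V}`. -/
def C2 : Submodule ℂ V.carrier :=
  Submodule.span ℂ {x : V.carrier | ∃ u v : V.carrier, x = V.op u (-2) v}

/-- The subspace `C₁(V) = span(v₋₁V₊ (v ∈ V₊) together with L(-1)V)`. -/
def C1 : Submodule ℂ V.carrier :=
  Submodule.span ℂ
    ({x : V.carrier | ∃ u ∈ V.pos, ∃ v ∈ V.pos, x = V.op u (-1) v}
      ∪ {x : V.carrier | ∃ v : V.carrier, x = V.op V.omega 0 v})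

/-- Iterated application of modes: `iterApply [(u¹,n₁),…,(uʳ,n_r)] w = u¹_{n₁} ⋯ uʳ_{n_r} w`. -/
def iterApply : List (V.carrier × ℤ) → V.carrier → V.carrier
  | [], w => w
  | p :: l, w => V.op p.1 p.2 (iterApply l w)

/-- `U ⊆ V` generates `V` as a vertex operator algebra:  `V` is linearly spanned by
the elements `u¹_{n₁} ⋯ uʳ_{n_r} 1` with `uⁱ ∈ U`, `n_i ∈ ℤ`. -/
def generates (U : Set V.carrier) : Prop :=
  Submodule.span ℂ {x : V.carrier | ∃ l : List (V.carrier × ℤ),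
    (∀ p ∈ l, p.1 ∈ U) ∧ x = V.iterApply l V.one} = ⊤

/-- `V` is finitely generated as a vertex operator algebra. -/
def FinitelyGenerated : Prop := ∃ S : Finset V.carrier, V.generates ↑S

end VOA

/-- A weak `V`-module: all axioms of a module (truncation, vacuum, Jacobi identity in
Borcherds form) except those involving gradings. -/
structure WeakModule (V : VOA) where
  carrier : Type
  [grp : AddCommGroup carrier]
  [mdl : Module ℂ carrier]
  op : V.carrier → ℤ → carrier → carrier
  op_linear_left : ∀ (n : ℤ) (w : carrier), IsLinearMap ℂ fun u => op u n w
  op_linear_right : ∀ (u : V.carrier) (n : ℤ), IsLinearMap ℂ (op u n)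
  trunc : ∀ (u : V.carrier) (w : carrier), ∃ N : ℤ, ∀ n : ℤ, N ≤ n → op u n w = 0
  one_op : ∀ (n : ℤ) (w : carrier), op V.one n w = if n = -1 then w else 0
  borcherds : ∀ (u v : V.carrier) (w : carrier) (l m n : ℤ),
    (∑ᶠ i : ℕ, cchoose m i • op (V.op u (l + (i : ℤ)) v) (m + n - (i : ℤ)) w)
      = ∑ᶠ i : ℕ, ((-1 : ℂ) ^ i * cchoose l i) •
          (op u (l + m - (i : ℤ)) (op v (n + (i : ℤ)) w)
            - ((-1 : ℂ) ^ l) • op v (l + n - (i : ℤ)) (op u (m + (i : ℤ)) w))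

attribute [instance] WeakModule.grp WeakModule.mdl

namespace WeakModule

variable {V : VOA} (W : WeakModule V)

/-- `L(0)` acting on a weak module, as a linear map. -/
def L0 : W.carrier →ₗ[ℂ] W.carrier := IsLinearMap.mk' _ (W.op_linear_right V.omega 1)

/-- The `L(0)`-eigenspace of eigenvalue `h`. -/
def eig (h : ℂ) : Submodule ℂ W.carrier :=
  LinearMap.ker (W.L0 - h • (LinearMap.id : W.carrier →ₗ[ℂ] W.carrier))

/-- The coefficient `v*ₙ` of the adjoint vertex operator
`⟨Y*(v,x)α, w⟩ = ⟨α, Y(e^{xL(1)}(-x^{-2})^{L(0)}v, x^{-1})w⟩` acting on the full dual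
space: for `v` homogeneous of weight `h`,
`(v*ₙ α)(w) = (-1)^h Σ_{i≥0} (1/i!) α((L(1)^i v)_{2h-n-i-2} w)`, extended to general
`v` via the weight-space projections. -/
def dmode (v : V.carrier) (n : ℤ) (α : W.carrier → ℂ) (w : W.carrier) : ℂ :=
  ∑ᶠ h : ℤ, ∑ᶠ i : ℕ,
    ((-1 : ℂ) ^ h / (Nat.factorial i : ℂ)) *
      α (W.op ((V.L 1)^[i] (V.proj h v)) (2 * h - n - (i : ℤ) - 2) w)

/-- `D(W) ⊆ W*`: the linear functionals `α` on `W` such that for every `v ∈ V`,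
`Y*(v,x)α ∈ W*((x))`, i.e. `v*ₙ α = 0` for `n` sufficiently large. -/
def DW : Set (W.carrier → ℂ) :=
  {α | IsLinearMap ℂ α ∧
    ∀ v : V.carrier, ∃ N : ℤ, ∀ n : ℤ, N ≤ n → ∀ w : W.carrier, W.dmode v n α w = 0}

/-- A subspace stable under all modes of all vertex operators, i.e. a `V`-submodule. -/
def IsStable (S : Submodule ℂ W.carrier) : Prop :=
  ∀ (v : V.carrier) (n : ℤ), ∀ m ∈ S, W.op v n m ∈ S

/-- An irreducible (nonzero, no proper nonzero stable subspaces) `V`-submodule. -/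
def IsIrreducibleSub (S : Submodule ℂ W.carrier) : Prop :=
  S ≠ ⊥ ∧ W.IsStable S ∧
    ∀ T : Submodule ℂ W.carrier, W.IsStable T → T ≤ S → T = ⊥ ∨ T = S

/-- A stable subspace which is an ordinary module: `L(0)` acts semisimply on it with
finite-dimensional eigenspaces, and for each `h` the eigenvalues `h + m` do not occur
for `m` a sufficiently negative integer. -/
def IsOrdinarySub (S : Submodule ℂ W.carrier) : Prop :=
  S ≤ (⨆ h : ℂ, W.eig h ⊓ S) ∧ (∀ h : ℂ, FiniteDimensional ℂ ↥(W.eig h ⊓ S)) ∧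
    ∀ h : ℂ, ∃ N : ℤ, ∀ m : ℤ, m ≤ N → W.eig (h + (m : ℂ)) ⊓ S = ⊥

/-- The weak module `W` is irreducible. -/
def IsIrreducible : Prop :=
  (⊥ : Submodule ℂ W.carrier) ≠ ⊤ ∧
    ∀ S : Submodule ℂ W.carrier, W.IsStable S → S = ⊥ ∨ S = ⊤

/-- `Cₙ(W) = span{v₋ₙw : v ∈ V, w ∈ W}`. -/
def Cn (n : ℤ) : Submodule ℂ W.carrier :=
  Submodule.span ℂ {x : W.carrier | ∃ (v : V.carrier) (w : W.carrier), x = W.op v (-n) w}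

/-- `B(W) = span(u₋₁W (u ∈ V₊) together with v₀W (v homogeneous, wt v ≥ 2))`. -/
def BW : Submodule ℂ W.carrier :=
  Submodule.span ℂ
    ({x : W.carrier | ∃ v ∈ V.pos, ∃ w : W.carrier, x = W.op v (-1) w}
      ∪ {x : W.carrier | ∃ k : ℤ, 2 ≤ k ∧ ∃ v ∈ V.wtSpace k, ∃ w : W.carrier, x = W.op v 0 w})

/-- Zhu's subspace `O(W) = span{Σ_{i≥0} C(wt v, i) v_{i-2} w}` so that `A(W) = W/O(W)`. -/
def OW : Submodule ℂ W.carrier :=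
  Submodule.span ℂ
    {x : W.carrier | ∃ (k : ℤ) (v : V.carrier), v ∈ V.wtSpace k ∧
      ∃ w : W.carrier, x = ∑ᶠ i : ℕ, cchoose k i • W.op v ((i : ℤ) - 2) w}

/-- A subspace `T ⊇ O(W)` of `W` is closed under the Frenkel–Zhu left and right
`A(V)`-actions `v * w = Σᵢ C(wt v, i) v_{i-1} w` and `w * v = Σᵢ C(wt v - 1, i) v_{i-1} w`;
for `T ⊇ O(W)` this expresses that `T/O(W)` is an `A(V)`-sub-bimodule of `A(W)`. -/
def BimoduleClosed (T : Submodule ℂ W.carrier) : Prop :=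
  ∀ k : ℤ, ∀ v ∈ V.wtSpace k, ∀ w ∈ T,
    (∑ᶠ i : ℕ, cchoose k i • W.op v ((i : ℤ) - 1) w) ∈ T ∧
    (∑ᶠ i : ℕ, cchoose (k - 1) i • W.op v ((i : ℤ) - 1) w) ∈ T

/-- Equivalence (isomorphism) of weak modules. -/
def Equiv (M N : WeakModule V) : Prop :=
  ∃ e : M.carrier ≃ₗ[ℂ] N.carrier,
    ∀ (v : V.carrier) (n : ℤ) (w : M.carrier), e (M.op v n w) = N.op v n (e w)

end WeakModule

/-- `V` is of class 𝒜: `L(0)` acts semisimply on every weak `V`-module. -/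
def VOA.classA (V : VOA) : Prop :=
  ∀ M : WeakModule V, (⨆ h : ℂ, M.eig h) = ⊤

/-- `V` is regular: every weak `V`-module is a direct sum of irreducible ordinary
`V`-modules. -/
def VOA.regular (V : VOA) : Prop :=
  ∀ M : WeakModule V, ∃ (ι : Type) (S : ι → Submodule ℂ M.carrier),
    (∀ i, M.IsIrreducibleSub (S i) ∧ M.IsOrdinarySub (S i)) ∧
    (∀ i, Disjoint (S i) (⨆ (j : ι) (_ : j ≠ i), S j)) ∧ (⨆ i, S i) = ⊤

/-- A generalized `V`-module: a weak module with a semisimple `L(0)`-action, graded by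
the `L(0)`-eigenvalues, with weight-space projections `projW`. -/
structure GenModule (V : VOA) extends WeakModule V where
  wt : ℂ → Submodule ℂ carrier
  projW : ℂ → carrier → carrier
  projW_linear : ∀ h : ℂ, IsLinearMap ℂ (projW h)
  projW_mem : ∀ (h : ℂ) (w : carrier), projW h w ∈ wt h
  projW_eq : ∀ h : ℂ, ∀ w ∈ wt h, projW h w = w
  projW_ne : ∀ g h : ℂ, g ≠ h → ∀ w ∈ wt g, projW h w = 0
  projW_finite : ∀ w : carrier, (Function.support fun h => projW h w).Finite
  projW_sum : ∀ w : carrier, (∑ᶠ h : ℂ, projW h w) = w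
  wt_L0 : ∀ h : ℂ, ∀ w ∈ wt h, op V.omega 1 w = h • w
  wt_op : ∀ k : ℤ, ∀ v ∈ V.wtSpace k, ∀ (h : ℂ) (n : ℤ), ∀ w ∈ wt h,
    op v n w ∈ wt (h + (k : ℂ) - (n : ℂ) - 1)

/-- An ordinary `V`-module: a generalized module whose weight spaces are
finite-dimensional and whose weights are truncated from below in each coset `h + ℤ`. -/
structure OrdModule (V : VOA) extends GenModule V where
  wt_fd : ∀ h : ℂ, FiniteDimensional ℂ ↥(wt h)
  wt_lower : ∀ h : ℂ, ∃ N : ℤ, ∀ m : ℤ, m ≤ N → wt (h + (m : ℂ)) = ⊥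

namespace GenModule

variable {V : VOA} (W : GenModule V)

/-- `W₊ = ⊕_{Re h > 0} W₍ₕ₎`. -/
def posW : Submodule ℂ W.carrier := ⨆ (h : ℂ) (_ : 0 < h.re), W.wt h

/-- `C₁(W) = span(v₋₁W₊ (v ∈ V₊) together with L(-1)W)`. -/
def C1W : Submodule ℂ W.carrier :=
  Submodule.span ℂ
    ({x : W.carrier | ∃ v ∈ V.pos, ∃ w ∈ W.posW, x = W.op v (-1) w}
      ∪ {x : W.carrier | ∃ w : W.carrier, x = W.op V.omega 0 w})

/-- The restricted dual `W' = ⊕ₕ W₍ₕ₎* ⊆ W*`: the linear functionals vanishing on all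
but finitely many weight spaces. -/
def restrictedDual : Set (W.carrier → ℂ) :=
  {α | IsLinearMap ℂ α ∧ {h : ℂ | ∃ w ∈ W.wt h, α w ≠ 0}.Finite}

end GenModule

/-- `D(W)⁰`: the sum of the `L(0)`-eigenspaces of the weak module `D(W) ⊆ W*`, where
`L*(0) = ω*₁` acts on `α ∈ W*` by `(L*(0)α)(w) = α(L(0)w)`. -/
def OrdModule.DW0 {V : VOA} (W : OrdModule V) : Set (W.carrier → ℂ) :=
  {α | ∃ (S : Finset ℂ) (f : ℂ → (W.carrier → ℂ)),
    (∀ h ∈ S, f h ∈ W.toWeakModule.DW ∧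
      ∀ w : W.carrier, f h (W.op V.omega 1 w) = h * f h w) ∧
    α = ∑ h ∈ S, f h}

/-- An ℕ-gradable weak `V`-module: a weak module with an ℕ-grading
`W = ⊕_{n∈ℕ} W(n)` with `v_m W(n) ⊆ W(wt v + n - m - 1)` (graded pieces of negative
index are zero). -/
structure NGradedModule (V : VOA) extends WeakModule V where
  gr : ℤ → Submodule ℂ carrier
  gr_neg : ∀ n : ℤ, n < 0 → gr n = ⊥
  gr_sup : (⨆ n : ℤ, gr n) = ⊤
  gr_indep : ∀ n : ℤ, Disjoint (gr n) (⨆ (m : ℤ) (_ : m ≠ n), gr m)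
  gr_op : ∀ k : ℤ, ∀ v ∈ V.wtSpace k, ∀ m n : ℤ, ∀ w ∈ gr n,
    op v m w ∈ gr (k + n - m - 1)

/-- An intertwining operator of type `(W₃; W₁ W₂)` in the sense of
Frenkel–Huang–Lepowsky, recorded through its complex-indexed modes
`I w₁ h w₂ = (w₁)ₕ w₂` (so `Y(w₁,x)w₂ = Σ_{h∈ℂ} (w₁)ₕ w₂ x^{-h-1}`):
linearity, truncation, the `L(-1)`-derivative property, and the Jacobi identity in
component (Borcherds) form. -/
def IsIntertwiner {V : VOA} (W1 W2 W3 : OrdModule V)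
    (I : W1.carrier → ℂ → W2.carrier → W3.carrier) : Prop :=
  (∀ (h : ℂ) (w2 : W2.carrier), IsLinearMap ℂ fun w1 => I w1 h w2) ∧
  (∀ (w1 : W1.carrier) (h : ℂ), IsLinearMap ℂ (I w1 h)) ∧
  (∀ (w1 : W1.carrier) (w2 : W2.carrier) (h : ℂ),
    ∃ N : ℤ, ∀ n : ℤ, N ≤ n → I w1 (h + (n : ℂ)) w2 = 0) ∧
  (∀ (w1 : W1.carrier) (h : ℂ) (w2 : W2.carrier),
    I (W1.op V.omega 0 w1) h w2 = (-h) • I w1 (h - 1) w2) ∧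
  (∀ (u : V.carrier) (w1 : W1.carrier) (w2 : W2.carrier) (l m : ℤ) (h : ℂ),
    (∑ᶠ i : ℕ, cchoose m i • I (W1.op u (l + (i : ℤ)) w1) ((m : ℂ) + h - (i : ℂ)) w2)
      = ∑ᶠ i : ℕ, ((-1 : ℂ) ^ i * cchoose l i) •
          (W3.op u (l + m - (i : ℤ)) (I w1 (h + (i : ℂ)) w2)
            - ((-1 : ℂ) ^ l) • I w1 ((l : ℂ) + h - (i : ℂ)) (W2.op u (m + (i : ℤ)) w2)))

/-- The fusion rule `dim I(W₃; W₁W₂)` is finite: the space of intertwining operators of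
the indicated type is finite-dimensional. -/
def FusionFinite {V : VOA} (W1 W2 W3 : OrdModule V) : Prop :=
  FiniteDimensional ℂ
    ↥(Submodule.span ℂ {I : W1.carrier → ℂ → W2.carrier → W3.carrier |
        IsIntertwiner W1 W2 W3 I})

end

/-!
On `α ∈ W*` the adjoint mode `v*ₙ` is the transpose of the opposite mode of `v`, the coefficient of
`Y(e^(x L(1)) (-x^(-2))^L(0) v, x^(-1))`, so every identity for `Y*` is the transpose of one for
operators on `W`. The Borcherds identity for opposite modes, with the order of the operators
reversed, reduces to homogeneous `u` and `v`. There the modes of `e^(x L(1)) (u_l v)` are expanded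
by the Leibniz rule for divided powers together with
`[L(1), u_n] = (L(1) u)_n + (2 wt u - n - 2) u_(n+1)`; a Vandermonde convolution collects the
binomial coefficients into the iterate side of the Borcherds identity of `W` for the vectors
`L(1)^k u / k!` and `L(1)^j v / j!`, whose commutator side gives back products of opposite modes.
The case `l = 0` is the commutator formula, and since `u_i v = 0` for large `i` it involves only
finitely many adjoint modes, so the adjoint modes preserve truncation, i.e. they preserve `D(W)`.
-/

open Finset
open scoped Nat

section Binomial

theorem choose_eq_neg_one_pow_mul_choose {R : Type*} [CommRing R] [BinomialRing R]
    (r : R) (n : ℕ) : Ring.choose r n = (-1) ^ n * Ring.choose (n - 1 - r) n := by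
  rw [← neg_neg r, Ring.choose_neg, neg_neg, Int.negOnePow_def, Units.smul_def, zsmul_eq_mul]
  congr 2
  · simp
  · ring

theorem sum_antidiagonal_neg_one_pow_mul_choose {R : Type*} [CommRing R] [BinomialRing R]
    (m x : R) (n : ℕ) :
    ∑ p ∈ antidiagonal n, (-1) ^ p.1 * Ring.choose m p.1 * Ring.choose (x - p.1) p.2 =
      Ring.choose (x - m) n := by
  calc ∑ p ∈ antidiagonal n, (-1) ^ p.1 * Ring.choose m p.1 * Ring.choose (x - p.1) p.2
      = ∑ p ∈ antidiagonal n, (-1) ^ n * (Ring.choose m p.1 * Ring.choose (n - 1 - x) p.2) := by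
        refine sum_congr rfl fun p hp ↦ ?_
        obtain rfl := HasAntidiagonal.mem_antidiagonal.1 hp
        rw [choose_eq_neg_one_pow_mul_choose (x - p.1), pow_add]
        push_cast
        ring_nf
    _ = (-1) ^ n * Ring.choose (n - 1 - (x - m)) n := by
        rw [← mul_sum, ← Ring.add_choose_eq n (Commute.all _ _)]
        ring_nf
    _ = Ring.choose (x - m) n := (choose_eq_neg_one_pow_mul_choose (x - m) n).symm

theorem cchoose_eq_choose (m : ℤ) (i : ℕ) : cchoose m i = Ring.choose (m : ℂ) i := by
  rw [Ring.choose_eq_smul, ← Polynomial.aeval_eq_smeval, Polynomial.aeval_def,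
    ← Polynomial.eval_map, descPochhammer_map, descPochhammer_eval_eq_prod_range, smul_eq_mul,
    cchoose, div_eq_inv_mul]

theorem succ_mul_choose_succ {K : Type*} [Field K] [CharZero K] (r : K) (n : ℕ) :
    (n + 1) * Ring.choose r (n + 1) = (r - n) * Ring.choose r n := by
  simpa [Nat.choose_succ_self_right, mul_comm] using Ring.choose_smul_choose r n.le_succ

theorem neg_one_zpow_sub_sub_one {K : Type*} [Field K] (p q l : ℤ) (i : ℕ) :
    (-1 : K) ^ (p + q - (l + i) - 1) =
      -((-1) ^ l * (-1) ^ p * (-1) ^ q) * (-1) ^ i := by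
  have h0 : (-1 : K) ≠ 0 := neg_ne_zero.2 one_ne_zero
  have heven : (-1 : K) ^ (2 * (l + i + 1)) = 1 := (even_two_mul _).neg_one_zpow
  rw [show p + q - (l + i) - 1 = l + p + q + i + 1 - 2 * (l + i + 1) by ring, zpow_sub₀ h0, heven]
  simp only [zpow_add₀ h0, zpow_natCast, zpow_one]
  ring

end Binomial

theorem sum_antidiagonal_antidiagonal_left_comm {M : Type*} [AddCommMonoid M] (f : ℕ → ℕ → ℕ → M)
    (n : ℕ) :
    ∑ p ∈ antidiagonal n, ∑ q ∈ antidiagonal p.2, f p.1 q.1 q.2 =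
      ∑ p ∈ antidiagonal n, ∑ q ∈ antidiagonal p.2, f q.1 p.1 q.2 := by
  simp only [sum_sigma']
  refine sum_nbij' (fun x ↦ ⟨(x.2.1, x.1.1 + x.2.2), (x.1.1, x.2.2)⟩)
    (fun x ↦ ⟨(x.2.1, x.1.1 + x.2.2), (x.1.1, x.2.2)⟩) ?_ ?_ ?_ ?_ ?_ <;>
  · simp only [mem_sigma, HasAntidiagonal.mem_antidiagonal, Sigma.forall, Prod.forall]
    grind

section DividedPower

variable {K M : Type*} [Field K] [AddCommGroup M] [Module K M]

/-- The divided power `f ^ n / n!`, i.e. the coefficient of `x ^ n` in `exp (x f)`. -/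
def divPow (f : Module.End K M) (n : ℕ) : Module.End K M := (n ! : K)⁻¹ • f ^ n

theorem divPow_zero (f : Module.End K M) : divPow f 0 = 1 := by simp [divPow]

theorem divPow_apply (f : Module.End K M) (n : ℕ) (v : M) :
    divPow f n v = (n ! : K)⁻¹ • (f ^ n) v := rfl

variable [CharZero K]

theorem succ_smul_divPow_succ (f : Module.End K M) (n : ℕ) :
    ((n : K) + 1) • divPow f (n + 1) = f * divPow f n := by
  have h : ((n : K) + 1) ≠ 0 := by exact_mod_cast n.succ_ne_zero
  rw [divPow, divPow, mul_smul_comm, ← pow_succ', smul_smul, Nat.factorial_succ, Nat.cast_mul,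
    Nat.cast_succ, mul_inv, mul_inv_cancel_left₀ h]

attribute [local instance] LieRing.ofAssociativeRing LieAlgebra.ofAssociativeAlgebra

theorem divPow_apply_apply (f g : Module.End K M) (n : ℕ) (v : M) :
    divPow f n (g v) =
      ∑ p ∈ antidiagonal n,
        divPow (LieAlgebra.ad K (Module.End K M) f) p.2 g (divPow f p.1 v) := by
  rw [← Nat.sum_antidiagonal_swap]
  have h := LieModule.toEnd_pow_lie (R := K) f g v n
  simp only [LieModule.toEnd_module_end, LieHom.id_apply, Module.End.lie_apply] at h
  simp only [Prod.fst_swap, Prod.snd_swap, divPow_apply, h, smul_sum, map_smul,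
    LinearMap.smul_apply]
  refine sum_congr rfl fun p hp ↦ ?_
  obtain rfl := HasAntidiagonal.mem_antidiagonal.1 hp
  rw [← Nat.cast_smul_eq_nsmul K, smul_smul, smul_smul, Nat.cast_add_choose]
  congr 1
  have := Nat.cast_ne_zero (R := K).2 (p.1 + p.2).factorial_ne_zero
  field_simp

-- Modelled on `f = ad L(1)`, `a k i = (L(1) ^ k u / k!)_(l + i)` and `x = 2 wt u - l - 2`.
theorem divPow_apply_eq_sum_choose (f : Module.End K M) (x : K) (a : ℕ → ℕ → M)
    (h : ∀ k i : ℕ,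
      f (a k i) = ((k : K) + 1) • a (k + 1) i + (x - 2 * k - i) • a k (i + 1)) (n : ℕ) :
    divPow f n (a 0 0) =
      ∑ p ∈ antidiagonal n, Ring.choose (x - p.1) p.2 • a p.1 p.2 := by
  induction n with
  | zero => simp [divPow_zero]
  | succ n ih =>
    have hn : ((n : K) + 1) ≠ 0 := by exact_mod_cast n.succ_ne_zero
    have key : ∀ k i : ℕ, ((k : K) + (i + 1)) * Ring.choose (x - k) (i + 1) =
        k * Ring.choose (x - k + 1) (i + 1) + (x - 2 * k - i) * Ring.choose (x - k) i := by
      intro k i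
      linear_combination succ_mul_choose_succ (x - k) i -
        k * Ring.choose_succ_succ (x - k) i
    refine (smul_right_injective M hn) ?_
    calc ((n : K) + 1) • divPow f (n + 1) (a 0 0)
        = ∑ p ∈ antidiagonal n, Ring.choose (x - p.1) p.2 •
            (((p.1 : K) + 1) • a (p.1 + 1) p.2 + (x - 2 * p.1 - p.2) • a p.1 (p.2 + 1)) := by
          rw [← LinearMap.smul_apply, succ_smul_divPow_succ, Module.End.mul_apply, ih, map_sum]
          simp only [map_smul, h]
      _ = ∑ p ∈ antidiagonal (n + 1), (p.1 * Ring.choose (x - p.1 + 1) p.2) • a p.1 p.2 +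
          ∑ p ∈ antidiagonal (n + 1), (((p.1 : K) + p.2) * Ring.choose (x - p.1) p.2 -
            p.1 * Ring.choose (x - p.1 + 1) p.2) • a p.1 p.2 := by
          rw [Nat.sum_antidiagonal_succ, Nat.sum_antidiagonal_succ']
          simp only [Nat.cast_zero, zero_mul, zero_smul, zero_add, Ring.choose_zero_right, add_zero,
            mul_one, sub_self, ← sum_add_distrib, smul_add, smul_smul, Nat.cast_add, Nat.cast_one]
          refine sum_congr rfl fun p _ ↦ ?_
          rw [key, add_sub_cancel_left, sub_add_eq_sub_sub, sub_add_cancel,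
            mul_comm (Ring.choose (x - p.1) p.2), mul_comm (Ring.choose (x - p.1) p.2)]
      _ = ((n : K) + 1) •
            ∑ p ∈ antidiagonal (n + 1), Ring.choose (x - p.1) p.2 • a p.1 p.2 := by
          rw [← sum_add_distrib, smul_sum]
          refine sum_congr rfl fun p hp ↦ ?_
          have hp' : (p.1 : K) + p.2 = n + 1 := by
            exact_mod_cast HasAntidiagonal.mem_antidiagonal.1 hp
          rw [← add_smul, add_sub_cancel, hp', smul_smul]

theorem sum_choose_smul_divPow_apply (f : Module.End K M) (x m : K) (a : ℕ → ℕ → M)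
    (h : ∀ k i : ℕ,
      f (a k i) = ((k : K) + 1) • a (k + 1) i + (x - 2 * k - i) • a k (i + 1)) (n : ℕ) :
    ∑ p ∈ antidiagonal n, ((-1) ^ p.1 * Ring.choose m p.1) • divPow f p.2 (a 0 p.1) =
      ∑ p ∈ antidiagonal n, Ring.choose (x - m - p.1) p.2 • a p.1 p.2 := by
  have shifted (r s : ℕ) : divPow f s (a 0 r) =
      ∑ q ∈ antidiagonal s, Ring.choose (x - q.1 - r) q.2 • a q.1 (r + q.2) := by
    have h' (k i : ℕ) : f (a k (r + i)) =
        ((k : K) + 1) • a (k + 1) (r + i) + (x - r - 2 * k - i) • a k (r + (i + 1)) := by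
      rw [h, ← add_assoc, Nat.cast_add, ← sub_sub, sub_right_comm x (r : K)]
    simpa only [add_zero, sub_right_comm x (r : K)] using
      divPow_apply_eq_sum_choose f (x - r) (fun k i ↦ a k (r + i)) h' s
  calc ∑ p ∈ antidiagonal n, ((-1) ^ p.1 * Ring.choose m p.1) • divPow f p.2 (a 0 p.1)
      = ∑ p ∈ antidiagonal n, ∑ q ∈ antidiagonal p.2,
          ((-1) ^ p.1 * Ring.choose m p.1 * Ring.choose (x - q.1 - p.1) q.2) •
            a q.1 (p.1 + q.2) := by
        simp only [shifted, smul_sum, smul_smul]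
    _ = ∑ p ∈ antidiagonal n, ∑ q ∈ antidiagonal p.2,
          ((-1) ^ q.1 * Ring.choose m q.1 * Ring.choose (x - p.1 - q.1) q.2) • a p.1 p.2 := by
        rw [sum_antidiagonal_antidiagonal_left_comm fun r k s ↦
          ((-1) ^ r * Ring.choose m r * Ring.choose (x - k - r) s) • a k (r + s)]
        refine sum_congr rfl fun p _ ↦ sum_congr rfl fun q hq ↦ ?_
        rw [HasAntidiagonal.mem_antidiagonal.1 hq]
    _ = ∑ p ∈ antidiagonal n, Ring.choose (x - m - p.1) p.2 • a p.1 p.2 := by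
        simp only [← sum_smul, sum_antidiagonal_neg_one_pow_mul_choose, sub_right_comm x m]

end DividedPower

section FiniteSum

variable {M : Type*} [AddCommMonoid M]

theorem finsum_eq_sum_range_of_le {f : ℕ → M} {N : ℕ} (h : ∀ i, N ≤ i → f i = 0) :
    ∑ᶠ i, f i = ∑ i ∈ range N, f i :=
  finsum_eq_finsetSum_of_support_subset f fun i hi ↦ by
    simpa using mt (h i) hi

theorem hasFiniteSupport_of_le {f : ℕ → M} {N : ℕ} (h : ∀ i, N ≤ i → f i = 0) :
    f.HasFiniteSupport :=
  (Set.finite_lt_nat N).subset fun i hi ↦ by simpa using mt (h i) hi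

theorem finsum_finsum_eq_finsum_sum_antidiagonal {f : ℕ → ℕ → M} {N : ℕ}
    (h : ∀ i j, N ≤ i + j → f i j = 0) :
    ∑ᶠ i, ∑ᶠ j, f i j = ∑ᶠ d, ∑ p ∈ antidiagonal d, f p.1 p.2 := by
  have hsupp : (fun p : ℕ × ℕ ↦ f p.1 p.2).support ⊆ ↑(range N ×ˢ range N) := fun p hp ↦ by
    have := mt (h p.1 p.2) hp
    simp only [coe_product, coe_range, Set.mem_prod, Set.mem_Iio]
    lia
  rw [← finsum_curry (fun p : ℕ × ℕ ↦ f p.1 p.2) ((finite_toSet _).subset hsupp),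
    finsum_eq_finsetSum_of_support_subset _ hsupp,
    ← finsum_sum_filter (fun p : ℕ × ℕ ↦ p.1 + p.2)]
  refine finsum_congr fun d ↦ sum_subset_zero_on_sdiff ?_ ?_ fun _ _ ↦ rfl
  · intro p hp
    simpa using (mem_filter.1 hp).2
  · intro p hp
    simp only [mem_sdiff, mem_filter, mem_product, mem_range,
      HasAntidiagonal.mem_antidiagonal] at hp
    exact h _ _ (by lia)

theorem finsum_finsum_finsum_eq_finsum_sum_antidiagonal {f : ℕ → ℕ → ℕ → M} {N : ℕ}
    (h : ∀ i j k, N ≤ i + j + k → f i j k = 0) :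
    ∑ᶠ i, ∑ᶠ j, ∑ᶠ k, f i j k =
      ∑ᶠ d, ∑ p ∈ antidiagonal d, ∑ q ∈ antidiagonal p.2, f p.1 q.1 q.2 := by
  have inner (i : ℕ) : ∑ᶠ j, ∑ᶠ k, f i j k = ∑ᶠ t, ∑ q ∈ antidiagonal t, f i q.1 q.2 :=
    finsum_finsum_eq_finsum_sum_antidiagonal (N := N) fun j k _ ↦ h i j k (by lia)
  simp only [inner]
  refine finsum_finsum_eq_finsum_sum_antidiagonal (N := N) fun i t _ ↦
    sum_eq_zero fun q hq ↦ h i q.1 q.2 ?_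
  rw [HasAntidiagonal.mem_antidiagonal] at hq
  lia

end FiniteSum

theorem cchoose_natCast (m i : ℕ) : cchoose m i = (m.choose i : ℂ) := by
  rw [cchoose_eq_choose, Int.cast_natCast, Ring.choose_natCast]

theorem finsum_cchoose_zero_smul {M : Type*} [AddCommMonoid M] [Module ℂ M] (f : ℕ → M) :
    ∑ᶠ i : ℕ, ((-1 : ℂ) ^ i * cchoose 0 i) • f i = f 0 := by
  rw [finsum_eq_single _ 0 fun i hi ↦ ?_]
  · simp [cchoose]
  · simp [cchoose_eq_choose, Ring.choose_zero_pos ℂ (Nat.pos_of_ne_zero hi)]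

noncomputable section

/-! ### Modes and the action of `L(1)` -/

namespace VOA

/-- The adjoint module: `V` as a weak module over itself. -/
abbrev adjointModule (V : VOA) : WeakModule V where
  carrier := V.carrier
  op := V.op
  op_linear_left := V.op_linear_left
  op_linear_right := V.op_linear_right
  trunc := V.trunc
  one_op := V.one_op
  borcherds := V.borcherds

end VOA

namespace WeakModule

variable {V : VOA} (W : WeakModule V)

/-- The mode `u ↦ uₙ` as a linear map from `V` to the endomorphisms of `W`. -/
def mode (n : ℤ) : V.carrier →ₗ[ℂ] Module.End ℂ W.carrier :=
  LinearMap.mk₂ ℂ (fun u w ↦ W.op u n w)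
    (fun u v w ↦ (W.op_linear_left n w).map_add u v)
    (fun c u w ↦ (W.op_linear_left n w).map_smul c u)
    (fun u w w' ↦ (W.op_linear_right u n).map_add w w')
    (fun c u w ↦ (W.op_linear_right u n).map_smul c w)

theorem mode_apply (n : ℤ) (u : V.carrier) (w : W.carrier) : W.mode n u w = W.op u n w := rfl

/-- The operator `L(1) = ω₂` on a weak module. -/
def L1 : Module.End ℂ W.carrier := W.mode 2 V.omega

theorem op_op_sub_op_op (u v : V.carrier) (m n : ℤ) (w : W.carrier) :
    W.op u m (W.op v n w) - W.op v n (W.op u m w) =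
      ∑ᶠ i : ℕ, cchoose m i • W.op (V.op u i v) (m + n - i) w := by
  have h := W.borcherds u v w 0 m n
  simp only [zero_add, finsum_cchoose_zero_smul] at h
  simpa using h.symm

theorem op_op_omega_zero (u : V.carrier) (n : ℤ) (w : W.carrier) :
    W.op (V.op V.omega 0 u) n w = (-n : ℂ) • W.op u (n - 1) w := by
  have hu : V.op V.omega 0 u = V.op u (-2) V.one := by
    simpa [V.create] using V.L_neg_one u (-1) V.one
  have lhs : ∑ᶠ i : ℕ, cchoose n i • W.op (V.op u (-2 + i) V.one) (n + 0 - i) w =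
      W.op (V.op V.omega 0 u) n w + (n : ℂ) • W.op u (n - 1) w := by
    rw [finsum_eq_sum_range_of_le (N := 2) fun i hi ↦ ?_]
    · simp [sum_range_succ, hu, V.create, cchoose]
    · rw [V.create_nonneg u _ (by lia), (W.op_linear_left _ w).map_zero, smul_zero]
  have rhs (i : ℕ) : W.op u (-2 + n - i) (W.op V.one (0 + i) w) -
      (-1 : ℂ) ^ (-2 : ℤ) • W.op V.one (-2 + 0 - i) (W.op u (n + i) w) = 0 := by
    rw [W.one_op, W.one_op, if_neg (by lia), if_neg (by lia), (W.op_linear_right _ _).map_zero,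
      smul_zero, sub_zero]
  have h := W.borcherds u V.one w (-2) n 0
  simp only [lhs, rhs, smul_zero, finsum_zero] at h
  rw [neg_smul]
  exact eq_neg_of_add_eq_zero_left h

attribute [local instance] LieRing.ofAssociativeRing LieAlgebra.ofAssociativeAlgebra

theorem lie_L1_mode {p : ℤ} {u : V.carrier} (hu : u ∈ V.wtSpace p) (n : ℤ) :
    ⁅W.L1, W.mode n u⁆ =
      W.mode n (V.adjointModule.L1 u) + (2 * p - n - 2 : ℂ) • W.mode (n + 1) u := by
  have hbinom (i : ℕ) : cchoose 2 i = (Nat.choose 2 i : ℂ) := cchoose_natCast 2 i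
  ext w
  have h : ⁅W.L1, W.mode n u⁆ w =
      ∑ i ∈ range 3, cchoose 2 i • W.mode (2 + n - i) (V.op V.omega i u) w :=
    (W.op_op_sub_op_op V.omega u 2 n w).trans <| finsum_eq_sum_range_of_le fun i hi ↦ by
      rw [hbinom, Nat.choose_eq_zero_of_lt hi, Nat.cast_zero, zero_smul]
  have h0 : W.mode (2 + n) (V.op V.omega 0 u) w = (-(n + 2) : ℂ) • W.mode (n + 1) u w := by
    rw [mode_apply, op_op_omega_zero, add_comm 2 n, add_sub_assoc]
    push_cast
    rfl
  have h1 : W.mode (2 + n - 1) (V.op V.omega 1 u) = (p : ℂ) • W.mode (n + 1) u := by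
    rw [V.L_zero p u hu, map_smul, show 2 + n - 1 = n + 1 by ring]
  have h2 : W.mode (2 + n - 2) (V.op V.omega 2 u) = W.mode n (V.adjointModule.L1 u) := by
    rw [add_sub_cancel_left]
    rfl
  simp only [h, sum_range_succ, range_zero, sum_empty, hbinom, Nat.choose, Nat.cast_zero,
    Nat.cast_one, Nat.cast_ofNat, sub_zero, h0, h1, h2, LinearMap.smul_apply, LinearMap.add_apply]
  module

end WeakModule

namespace VOA

variable (V : VOA)

/-- The operator `L(1) ^ k / k!` on `V`, i.e. the coefficient of `x ^ k` in `exp (x L(1))`. -/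
def expL1 (k : ℕ) : Module.End ℂ V.carrier := divPow V.adjointModule.L1 k

variable {V}

theorem L1_mem {p : ℤ} {u : V.carrier} (hu : u ∈ V.wtSpace p) :
    V.adjointModule.L1 u ∈ V.wtSpace (p - 1) := by
  have h := V.op_wt 2 p 2 V.omega V.omega_wt u hu
  rwa [show 2 + p - 2 - 1 = p - 1 by ring] at h

theorem expL1_mem {p : ℤ} {u : V.carrier} (hu : u ∈ V.wtSpace p) (k : ℕ) :
    V.expL1 k u ∈ V.wtSpace (p - k) := by
  suffices (V.adjointModule.L1 ^ k) u ∈ V.wtSpace (p - k) from Submodule.smul_mem _ _ this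
  induction k with
  | zero => simpa using hu
  | succ k ih =>
    rw [pow_succ', Module.End.mul_apply]
    convert L1_mem ih using 2
    push_cast
    ring

attribute [local instance] LieRing.ofAssociativeRing LieAlgebra.ofAssociativeAlgebra in
theorem lie_L1_mode_expL1 (W : WeakModule V) {p : ℤ} {u : V.carrier} (hu : u ∈ V.wtSpace p)
    (k : ℕ) (n : ℤ) :
    ⁅W.L1, W.mode n (V.expL1 k u)⁆ = ((k : ℂ) + 1) • W.mode n (V.expL1 (k + 1) u) +
      (2 * p - n - 2 - 2 * k : ℂ) • W.mode (n + 1) (V.expL1 k u) := by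
  have hk : V.adjointModule.L1 (V.expL1 k u) = ((k : ℂ) + 1) • V.expL1 (k + 1) u := by
    rw [expL1, ← Module.End.mul_apply, ← succ_smul_divPow_succ]
    rfl
  rw [W.lie_L1_mode (expL1_mem hu k), hk, map_smul]
  congr 2
  push_cast
  ring

attribute [local instance] LieRing.ofAssociativeRing LieAlgebra.ofAssociativeAlgebra in
theorem sum_cchoose_smul_expL1_op {p : ℤ} {u : V.carrier} (hu : u ∈ V.wtSpace p) (v : V.carrier)
    (l m : ℤ) (d : ℕ) :
    ∑ a ∈ antidiagonal d, ((-1 : ℂ) ^ a.1 * cchoose m a.1) • V.expL1 a.2 (V.op u (l + a.1) v) =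
      ∑ b ∈ antidiagonal d, ∑ c ∈ antidiagonal b.2,
        cchoose (2 * p - l - m - 2 - c.1) c.2 •
          V.op (V.expL1 c.1 u) (l + c.2) (V.expL1 b.1 v) := by
  let A (k i : ℕ) : Module.End ℂ V.carrier := V.adjointModule.mode (l + i) (V.expL1 k u)
  let D (s : ℕ) := divPow (LieAlgebra.ad ℂ (Module.End ℂ V.carrier) V.adjointModule.L1) s
  have hA (k i : ℕ) : LieAlgebra.ad ℂ (Module.End ℂ V.carrier) V.adjointModule.L1 (A k i) =
      ((k : ℂ) + 1) • A (k + 1) i + (2 * p - l - 2 - 2 * k - i : ℂ) • A k (i + 1) := by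
    refine (lie_L1_mode_expL1 V.adjointModule hu k (l + i)).trans ?_
    simp only [A, Nat.cast_succ, ← add_assoc]
    congr 2
    push_cast
    ring
  calc ∑ a ∈ antidiagonal d, ((-1 : ℂ) ^ a.1 * cchoose m a.1) • V.expL1 a.2 (V.op u (l + a.1) v)
      = ∑ a ∈ antidiagonal d, ∑ b ∈ antidiagonal a.2,
          ((-1 : ℂ) ^ a.1 * cchoose m a.1) • D b.2 (A 0 a.1) (V.expL1 b.1 v) := by
        refine sum_congr rfl fun a _ ↦ ?_
        rw [← smul_sum]
        have h0 : V.op u (l + a.1) v = A 0 a.1 v := by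
          simp only [A, expL1, divPow_zero, Module.End.one_apply]
          rfl
        rw [h0]
        exact congrArg _ (divPow_apply_apply V.adjointModule.L1 (A 0 a.1) a.2 v)
    _ = ∑ b ∈ antidiagonal d, (∑ a ∈ antidiagonal b.2,
          ((-1 : ℂ) ^ a.1 * cchoose m a.1) • D a.2 (A 0 a.1)) (V.expL1 b.1 v) := by
        rw [sum_antidiagonal_antidiagonal_left_comm fun a b s ↦
          ((-1 : ℂ) ^ a * cchoose m a) • D s (A 0 a) (V.expL1 b v)]
        simp only [LinearMap.sum_apply, LinearMap.smul_apply]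
    _ = _ := by
        simp only [cchoose_eq_choose]
        simp only [D, sum_choose_smul_divPow_apply _ _ (m : ℂ) A hA]
        simp only [LinearMap.sum_apply, LinearMap.smul_apply, A]
        refine sum_congr rfl fun b _ ↦ sum_congr rfl fun c _ ↦ congrArg₂ _ ?_ rfl
        push_cast
        ring_nf

theorem exists_expL1_apply_eq_zero {p : ℤ} {u : V.carrier} (hu : u ∈ V.wtSpace p) :
    ∃ N : ℕ, ∀ k, N ≤ k → V.expL1 k u = 0 := by
  obtain ⟨M, hM⟩ := V.lower_trunc
  exact ⟨(p - M + 1).toNat, fun k hk ↦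
    (Submodule.eq_bot_iff _).1 (hM (p - k) (by lia)) _ (expL1_mem hu k)⟩

theorem exists_expL1_op_eq_zero {p q : ℤ} {u v : V.carrier} (hu : u ∈ V.wtSpace p)
    (hv : v ∈ V.wtSpace q) (l : ℤ) :
    ∃ N : ℕ, ∀ i s : ℕ, N ≤ i + s → V.expL1 s (V.op u (l + i) v) = 0 := by
  obtain ⟨M, hM⟩ := V.lower_trunc
  exact ⟨(p + q - l - M).toNat, fun i s h ↦ (Submodule.eq_bot_iff _).1 (hM _ (by lia)) _
    (expL1_mem (V.op_wt p q (l + i) u hu v hv) s)⟩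

theorem exists_op_expL1_expL1_eq_zero {p q : ℤ} {u v : V.carrier} (hu : u ∈ V.wtSpace p)
    (hv : v ∈ V.wtSpace q) (l : ℤ) :
    ∃ N : ℕ, ∀ j k i : ℕ, N ≤ j + k + i → V.op (V.expL1 k u) (l + i) (V.expL1 j v) = 0 := by
  obtain ⟨M, hM⟩ := V.lower_trunc
  exact ⟨(p + q - l - M).toNat, fun j k i h ↦ (Submodule.eq_bot_iff _).1 (hM _ (by lia)) _
    (V.op_wt _ _ (l + i) _ (expL1_mem hu k) _ (expL1_mem hv j))⟩

end VOA

/-! ### Opposite modes -/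

theorem VOA.homogeneous_induction {V : VOA} {P : V.carrier → Prop}
    (homogeneous : ∀ p : ℤ, ∀ v ∈ V.wtSpace p, P v) (add : ∀ u v, P u → P v → P (u + v))
    (v : V.carrier) : P v := by
  rw [← V.proj_sum v]
  exact finsum_induction P (homogeneous 0 0 (Submodule.zero_mem _)) add
    fun p ↦ homogeneous p _ (V.proj_mem p v)

namespace WeakModule

variable {V : VOA} (W : WeakModule V)

theorem hasFiniteSupport_mode_expL1 {p : ℤ} {v : V.carrier} (hv : v ∈ V.wtSpace p) (c : ℂ)
    (f : ℕ → ℤ) : (fun k : ℕ ↦ c • W.mode (f k) (V.expL1 k v)).HasFiniteSupport := by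
  obtain ⟨N, hN⟩ := V.exists_expL1_apply_eq_zero hv
  exact hasFiniteSupport_of_le (N := N) fun k hk ↦ by rw [hN k hk, map_zero, smul_zero]

theorem hasFiniteSupport_finsum_mode_expL1_proj (v : V.carrier) (n : ℤ) :
    (fun p : ℤ ↦ ∑ᶠ k : ℕ,
      (-1 : ℂ) ^ p • W.mode (2 * p - n - k - 2) (V.expL1 k (V.proj p v))).HasFiniteSupport :=
  (V.proj_finite v).subset fun p hp h ↦ hp <| by
    simp only at h
    simp only [h, map_zero, smul_zero, finsum_zero]

/-- The coefficient of `x ^ (-n - 1)` in the opposite vertex operator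
`Y(e ^ (x L(1)) (-x ^ (-2)) ^ L(0) v, x ^ (-1))`, as a linear map in `v`. -/
def oppositeMode (n : ℤ) : V.carrier →ₗ[ℂ] Module.End ℂ W.carrier where
  toFun v := ∑ᶠ p : ℤ, ∑ᶠ k : ℕ,
    (-1 : ℂ) ^ p • W.mode (2 * p - n - k - 2) (V.expL1 k (V.proj p v))
  map_add' u v := by
    rw [← finsum_add_distrib (W.hasFiniteSupport_finsum_mode_expL1_proj u n)
      (W.hasFiniteSupport_finsum_mode_expL1_proj v n)]
    refine finsum_congr fun p ↦ ?_
    rw [← finsum_add_distrib (W.hasFiniteSupport_mode_expL1 (V.proj_mem p u) _ _)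
      (W.hasFiniteSupport_mode_expL1 (V.proj_mem p v) _ _)]
    simp only [(V.proj_linear p).map_add, map_add, smul_add]
  map_smul' c v := by
    simp only [(V.proj_linear _).map_smul, map_smul, smul_finsum, RingHom.id_apply,
      smul_comm _ c]

theorem oppositeMode_apply_of_mem {p : ℤ} {v : V.carrier} (hv : v ∈ V.wtSpace p) (n : ℤ) :
    W.oppositeMode n v =
      ∑ᶠ k : ℕ, (-1 : ℂ) ^ p • W.mode (2 * p - n - k - 2) (V.expL1 k v) := by
  refine (finsum_eq_single _ p fun q hq ↦ ?_).trans ?_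
  · simp only [V.proj_ne p q hq.symm v hv, map_zero, smul_zero, finsum_zero]
  · simp only [V.proj_eq p v hv]

theorem oppositeMode_apply_apply_of_mem {p : ℤ} {v : V.carrier} (hv : v ∈ V.wtSpace p) {N : ℕ}
    (hN : ∀ k, N ≤ k → V.expL1 k v = 0) (n : ℤ) (w : W.carrier) :
    W.oppositeMode n v w =
      ∑ k ∈ range N, (-1 : ℂ) ^ p • W.mode (2 * p - n - k - 2) (V.expL1 k v) w := by
  rw [W.oppositeMode_apply_of_mem hv, finsum_eq_sum_range_of_le (N := N) fun k hk ↦ ?_]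
  · simp only [LinearMap.sum_apply, LinearMap.smul_apply]
  · rw [hN k hk, map_zero, smul_zero]

theorem exists_oppositeMode_apply_eq_zero (v : V.carrier) (w : W.carrier) :
    ∃ K : ℤ, ∀ n ≤ K, W.oppositeMode n v w = 0 := by
  induction v using V.homogeneous_induction with
  | homogeneous p v hv =>
    obtain ⟨N, hN⟩ := V.exists_expL1_apply_eq_zero hv
    choose B hB using fun k : ℕ ↦ W.trunc (V.expL1 k v) w
    obtain ⟨C, hC⟩ := ((range N).image B).bddAbove
    refine ⟨2 * p - N - 2 - C, fun n hn ↦ ?_⟩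
    rw [W.oppositeMode_apply_apply_of_mem hv hN]
    refine sum_eq_zero fun k hk ↦ ?_
    have hk' : B k ≤ C := hC (mem_coe.2 (mem_image_of_mem B hk))
    rw [mem_range] at hk
    rw [mode_apply, hB k _ (by lia), smul_zero]
  | add u v hu hv =>
    obtain ⟨K, hK⟩ := hu
    obtain ⟨K', hK'⟩ := hv
    refine ⟨min K K', fun n hn ↦ ?_⟩
    rw [map_add, LinearMap.add_apply, hK n (hn.trans (min_le_left _ _)),
      hK' n (hn.trans (min_le_right _ _)), add_zero]

theorem oppositeMode_one_apply (n : ℤ) (w : W.carrier) :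
    W.oppositeMode n V.one w = if n = -1 then w else 0 := by
  have hN (k : ℕ) (hk : 1 ≤ k) : V.expL1 k V.one = 0 := by
    obtain ⟨k, rfl⟩ := Nat.exists_eq_add_of_le' hk
    have h : V.adjointModule.L1 V.one = 0 := V.create_nonneg _ _ (by norm_num)
    rw [VOA.expL1, divPow_apply, pow_succ, Module.End.mul_apply, h, map_zero, smul_zero]
  rw [W.oppositeMode_apply_apply_of_mem V.one_wt hN]
  simp only [range_one, sum_singleton, zpow_zero, one_smul, VOA.expL1, divPow_zero,
    Module.End.one_apply, mode_apply, W.one_op]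
  exact if_congr (by lia) rfl rfl

/-! ### The Borcherds identity for opposite modes -/

theorem finsum_cchoose_smul_oppositeMode_op {p q : ℤ} {u v : V.carrier} (hu : u ∈ V.wtSpace p)
    (hv : v ∈ V.wtSpace q) (l m n : ℤ) (w : W.carrier) :
    ∑ᶠ i : ℕ, cchoose m i • W.oppositeMode (m + n - i) (V.op u (l + i) v) w =
      -((-1 : ℂ) ^ l * (-1 : ℂ) ^ p * (-1 : ℂ) ^ q) • ∑ᶠ d : ℕ,
        W.mode (2 * p + 2 * q - 2 * l - m - n - 4 - d) (∑ a ∈ antidiagonal d,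
          ((-1 : ℂ) ^ a.1 * cchoose m a.1) • V.expL1 a.2 (V.op u (l + a.1) v)) w := by
  obtain ⟨N, hN⟩ := VOA.exists_expL1_op_eq_zero hu hv l
  let D (d : ℕ) : ℤ := 2 * p + 2 * q - 2 * l - m - n - 4 - d
  let c : ℂ := -((-1 : ℂ) ^ l * (-1 : ℂ) ^ p * (-1 : ℂ) ^ q)
  have expand (i : ℕ) : cchoose m i • W.oppositeMode (m + n - i) (V.op u (l + i) v) w =
      ∑ᶠ s : ℕ, c • ((-1 : ℂ) ^ i * cchoose m i) •
        W.mode (D (i + s)) (V.expL1 s (V.op u (l + i) v)) w := by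
    rw [W.oppositeMode_apply_apply_of_mem (V.op_wt p q (l + i) u hu v hv)
      (fun s hs ↦ hN i s (le_add_left hs)), smul_sum, finsum_eq_sum_range_of_le (N := N)
      fun s hs ↦ by rw [hN i s (le_add_left hs), map_zero, LinearMap.zero_apply, smul_zero,
        smul_zero]]
    refine sum_congr rfl fun s _ ↦ ?_
    rw [neg_one_zpow_sub_sub_one, smul_smul, smul_smul,
      show 2 * (p + q - (l + i) - 1) - (m + n - i) - s - 2 = D (i + s) by grind]
    congr 1
    ring
  simp only [expand]
  rw [finsum_finsum_eq_finsum_sum_antidiagonal (N := N) fun i s h ↦ by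
    rw [hN i s h, map_zero, LinearMap.zero_apply, smul_zero, smul_zero], smul_finsum]
  refine finsum_congr fun d ↦ ?_
  rw [map_sum, LinearMap.sum_apply, smul_sum]
  refine sum_congr rfl fun a ha ↦ ?_
  rw [HasAntidiagonal.mem_antidiagonal.1 ha, map_smul, LinearMap.smul_apply]

theorem finsum_mode_sum_antidiagonal_expL1_op {p q : ℤ} {u v : V.carrier} (hu : u ∈ V.wtSpace p)
    (hv : v ∈ V.wtSpace q) (l m r : ℤ) (w : W.carrier) :
    ∑ᶠ d : ℕ, W.mode (r - d) (∑ a ∈ antidiagonal d,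
        ((-1 : ℂ) ^ a.1 * cchoose m a.1) • V.expL1 a.2 (V.op u (l + a.1) v)) w =
      ∑ᶠ j : ℕ, ∑ᶠ k : ℕ, ∑ᶠ i : ℕ, cchoose (2 * p - l - m - 2 - k) i •
        W.op (V.op (V.expL1 k u) (l + i) (V.expL1 j v)) (r - (j + k + i)) w := by
  obtain ⟨N, hN⟩ := VOA.exists_op_expL1_expL1_eq_zero hu hv l
  rw [finsum_finsum_finsum_eq_finsum_sum_antidiagonal (N := N) fun j k i h ↦ by
    rw [hN j k i h, (W.op_linear_left _ _).map_zero, smul_zero]]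
  refine finsum_congr fun d ↦ ?_
  rw [VOA.sum_cchoose_smul_expL1_op hu]
  simp only [map_sum, map_smul, LinearMap.sum_apply, LinearMap.smul_apply, mode_apply]
  refine sum_congr rfl fun b hb ↦ sum_congr rfl fun a ha ↦ ?_
  rw [HasAntidiagonal.mem_antidiagonal] at ha hb
  rw [← hb, ← ha]
  push_cast
  rw [add_assoc]

theorem oppositeMode_apply_oppositeMode_apply {p q : ℤ} {u v : V.carrier} (hu : u ∈ V.wtSpace p)
    (hv : v ∈ V.wtSpace q) {N : ℕ} (hNu : ∀ k, N ≤ k → V.expL1 k u = 0)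
    (hNv : ∀ j, N ≤ j → V.expL1 j v = 0) (a b : ℤ) (w : W.carrier) :
    W.oppositeMode a u (W.oppositeMode b v w) = ∑ k ∈ range N, ∑ j ∈ range N,
      ((-1 : ℂ) ^ p * (-1 : ℂ) ^ q) • W.op (V.expL1 k u) (2 * p - a - 2 - k)
        (W.op (V.expL1 j v) (2 * q - b - 2 - j) w) := by
  rw [W.oppositeMode_apply_apply_of_mem hu hNu, W.oppositeMode_apply_apply_of_mem hv hNv]
  simp only [map_sum, map_smul, smul_sum, smul_smul, mode_apply, sub_right_comm _ _ (2 : ℤ)]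

/-- The `i`-th summand on the commutator side of the Borcherds identity for `u` and `v` with
indices `l`, `m`, `n`. -/
def borcherdsTerm (u v : V.carrier) (l m n : ℤ) (w : W.carrier) (i : ℕ) : W.carrier :=
  ((-1 : ℂ) ^ i * cchoose l i) • (W.op u (l + m - i) (W.op v (n + i) w) -
    (-1 : ℂ) ^ l • W.op v (l + n - i) (W.op u (m + i) w))

theorem hasFiniteSupport_borcherdsTerm (u v : V.carrier) (l m n : ℤ) (w : W.carrier) :
    (W.borcherdsTerm u v l m n w).HasFiniteSupport := by
  obtain ⟨A, hA⟩ := W.trunc u w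
  obtain ⟨B, hB⟩ := W.trunc v w
  refine hasFiniteSupport_of_le (N := (A - m).toNat + (B - n).toNat) fun i hi ↦ ?_
  rw [borcherdsTerm, hA _ (by lia), hB _ (by lia), (W.op_linear_right _ _).map_zero,
    (W.op_linear_right _ _).map_zero, smul_zero, sub_zero, smul_zero]

theorem borcherdsTerm_eq_zero {u v : V.carrier} (h : u = 0 ∨ v = 0) (l m n : ℤ) (w : W.carrier)
    (i : ℕ) : W.borcherdsTerm u v l m n w i = 0 := by
  simp only [borcherdsTerm, ← mode_apply]
  rcases h with rfl | rfl <;> simp only [map_zero, LinearMap.zero_apply, smul_zero, sub_zero]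

theorem finsum_cchoose_smul_oppositeMode_op_eq_finsum_borcherdsTerm {p q : ℤ} {u v : V.carrier}
    (hu : u ∈ V.wtSpace p) (hv : v ∈ V.wtSpace q) (l m n : ℤ) (w : W.carrier) :
    ∑ᶠ i : ℕ, cchoose m i • W.oppositeMode (m + n - i) (V.op u (l + i) v) w =
      -((-1 : ℂ) ^ l * (-1 : ℂ) ^ p * (-1 : ℂ) ^ q) • ∑ᶠ j : ℕ, ∑ᶠ k : ℕ, ∑ᶠ i : ℕ,
        W.borcherdsTerm (V.expL1 k u) (V.expL1 j v) l (2 * p - l - m - 2 - k)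
          (2 * q - l - n - 2 - j) w i := by
  rw [W.finsum_cchoose_smul_oppositeMode_op hu hv, W.finsum_mode_sum_antidiagonal_expL1_op hu hv]
  refine congrArg _ (finsum_congr fun j ↦ finsum_congr fun k ↦ ?_)
  refine Eq.trans (finsum_congr fun i ↦ ?_) (W.borcherds _ _ w l _ _)
  congr 2
  ring

theorem smul_oppositeMode_sub_eq_sum_borcherdsTerm {p q : ℤ} {u v : V.carrier}
    (hu : u ∈ V.wtSpace p) (hv : v ∈ V.wtSpace q) {N : ℕ} (hNu : ∀ k, N ≤ k → V.expL1 k u = 0)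
    (hNv : ∀ j, N ≤ j → V.expL1 j v = 0) (l m n : ℤ) (w : W.carrier) (i : ℕ) :
    ((-1 : ℂ) ^ i * cchoose l i) •
        (W.oppositeMode (n + i) v (W.oppositeMode (l + m - i) u w) -
          (-1 : ℂ) ^ l • W.oppositeMode (m + i) u (W.oppositeMode (l + n - i) v w)) =
      -((-1 : ℂ) ^ l * (-1 : ℂ) ^ p * (-1 : ℂ) ^ q) • ∑ j ∈ range N, ∑ k ∈ range N,
        W.borcherdsTerm (V.expL1 k u) (V.expL1 j v) l (2 * p - l - m - 2 - k)
          (2 * q - l - n - 2 - j) w i := by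
  have hl : (-1 : ℂ) ^ l * (-1 : ℂ) ^ l = 1 := by rw [← mul_zpow]; simp
  rw [W.oppositeMode_apply_oppositeMode_apply hv hu hNv hNu,
    W.oppositeMode_apply_oppositeMode_apply hu hv hNu hNv,
    sum_comm (f := fun k j ↦ _ • W.op (V.expL1 k u) _ (W.op (V.expL1 j v) _ w))]
  simp only [smul_sum, ← sum_sub_distrib, borcherdsTerm]
  refine sum_congr rfl fun j _ ↦ sum_congr rfl fun k _ ↦ ?_
  rw [show l + (2 * p - l - m - 2 - k) - i = 2 * p - (m + i) - 2 - k by ring,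
    show 2 * q - l - n - 2 - j + i = 2 * q - (l + n - i) - 2 - j by ring,
    show l + (2 * q - l - n - 2 - j) - i = 2 * q - (n + i) - 2 - j by ring,
    show 2 * p - l - m - 2 - k + i = 2 * p - (l + m - i) - 2 - k by ring]
  match_scalars
  · linear_combination (-(-1 : ℂ) ^ i * cchoose l i * (-1 : ℂ) ^ p * (-1 : ℂ) ^ q) * hl
  · ring

theorem oppositeMode_borcherds_of_mem {p q : ℤ} {u v : V.carrier} (hu : u ∈ V.wtSpace p)
    (hv : v ∈ V.wtSpace q) (l m n : ℤ) (w : W.carrier) :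
    ∑ᶠ i : ℕ, cchoose m i • W.oppositeMode (m + n - i) (V.op u (l + i) v) w =
      ∑ᶠ i : ℕ, ((-1 : ℂ) ^ i * cchoose l i) •
        (W.oppositeMode (n + i) v (W.oppositeMode (l + m - i) u w) -
          (-1 : ℂ) ^ l • W.oppositeMode (m + i) u (W.oppositeMode (l + n - i) v w)) := by
  obtain ⟨A, hA⟩ := VOA.exists_expL1_apply_eq_zero hu
  obtain ⟨B, hB⟩ := VOA.exists_expL1_apply_eq_zero hv
  let N := A + B
  have hNu (k : ℕ) (hk : N ≤ k) : V.expL1 k u = 0 := hA k (by lia)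
  have hNv (j : ℕ) (hj : N ≤ j) : V.expL1 j v = 0 := hB j (by lia)
  let T (j k i : ℕ) : W.carrier := W.borcherdsTerm (V.expL1 k u) (V.expL1 j v) l
    (2 * p - l - m - 2 - k) (2 * q - l - n - 2 - j) w i
  have hT (j k : ℕ) (h : N ≤ j ∨ N ≤ k) : ∑ᶠ i, T j k i = 0 :=
    finsum_eq_zero_of_forall_eq_zero fun i ↦
      W.borcherdsTerm_eq_zero (h.symm.imp (hNu k) (hNv j)) _ _ _ w i
  have swap : ∑ᶠ j : ℕ, ∑ᶠ k : ℕ, ∑ᶠ i : ℕ, T j k i =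
      ∑ᶠ i : ℕ, ∑ j ∈ range N, ∑ k ∈ range N, T j k i := by
    have fin (j k : ℕ) : (T j k).HasFiniteSupport := W.hasFiniteSupport_borcherdsTerm _ _ _ _ _ w
    rw [finsum_eq_sum_range_of_le (N := N) fun j hj ↦ by simp only [hT, hj, true_or, finsum_zero]]
    simp only [← sum_product']
    rw [finsum_sum_comm _ _ fun x _ ↦ fin x.1 x.2, sum_product]
    exact sum_congr rfl fun j _ ↦ finsum_eq_sum_range_of_le fun k hk ↦ hT j k (Or.inr hk)
  rw [W.finsum_cchoose_smul_oppositeMode_op_eq_finsum_borcherdsTerm hu hv, swap, smul_finsum]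
  exact finsum_congr fun i ↦
    (W.smul_oppositeMode_sub_eq_sum_borcherdsTerm hu hv hNu hNv l m n w i).symm

theorem hasFiniteSupport_oppositeMode_op (u v : V.carrier) (l m n : ℤ) (w : W.carrier) :
    (fun i : ℕ ↦
      cchoose m i • W.oppositeMode (m + n - i) (V.op u (l + i) v) w).HasFiniteSupport := by
  obtain ⟨A, hA⟩ := V.trunc u v
  refine hasFiniteSupport_of_le (N := (A - l).toNat) fun i hi ↦ ?_
  rw [hA _ (by lia), map_zero, LinearMap.zero_apply, smul_zero]

theorem hasFiniteSupport_oppositeMode_oppositeMode (u v : V.carrier) (l m n : ℤ) (w : W.carrier) :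
    (fun i : ℕ ↦ ((-1 : ℂ) ^ i * cchoose l i) •
      (W.oppositeMode (n + i) v (W.oppositeMode (l + m - i) u w) -
        (-1 : ℂ) ^ l • W.oppositeMode (m + i) u
          (W.oppositeMode (l + n - i) v w))).HasFiniteSupport := by
  obtain ⟨A, hA⟩ := W.exists_oppositeMode_apply_eq_zero u w
  obtain ⟨B, hB⟩ := W.exists_oppositeMode_apply_eq_zero v w
  refine hasFiniteSupport_of_le (N := (l + m - A).toNat + (l + n - B).toNat) fun i hi ↦ ?_
  rw [hA _ (by lia), hB _ (by lia), map_zero, map_zero, smul_zero, sub_zero, smul_zero]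

theorem oppositeMode_borcherds (u v : V.carrier) (l m n : ℤ) (w : W.carrier) :
    ∑ᶠ i : ℕ, cchoose m i • W.oppositeMode (m + n - i) (V.op u (l + i) v) w =
      ∑ᶠ i : ℕ, ((-1 : ℂ) ^ i * cchoose l i) •
        (W.oppositeMode (n + i) v (W.oppositeMode (l + m - i) u w) -
          (-1 : ℂ) ^ l • W.oppositeMode (m + i) u (W.oppositeMode (l + n - i) v w)) := by
  induction u using V.homogeneous_induction with
  | homogeneous p u hu =>
    induction v using V.homogeneous_induction with
    | homogeneous q v hv => exact W.oppositeMode_borcherds_of_mem hu hv l m n w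
    | add v v' hv hv' =>
      have h := congrArg₂ (· + ·) hv hv'
      simp only [← finsum_add_distrib (W.hasFiniteSupport_oppositeMode_op _ _ _ _ _ _)
          (W.hasFiniteSupport_oppositeMode_op _ _ _ _ _ _),
        ← finsum_add_distrib (W.hasFiniteSupport_oppositeMode_oppositeMode _ _ _ _ _ _)
          (W.hasFiniteSupport_oppositeMode_oppositeMode _ _ _ _ _ _)] at h
      convert h using 3 with i i
      · rw [(V.op_linear_right _ _).map_add, map_add, LinearMap.add_apply, smul_add]
      · simp only [map_add, LinearMap.add_apply]
        module
  | add u u' hu hu' =>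
    have h := congrArg₂ (· + ·) hu hu'
    simp only [← finsum_add_distrib (W.hasFiniteSupport_oppositeMode_op _ _ _ _ _ _)
        (W.hasFiniteSupport_oppositeMode_op _ _ _ _ _ _),
      ← finsum_add_distrib (W.hasFiniteSupport_oppositeMode_oppositeMode _ _ _ _ _ _)
        (W.hasFiniteSupport_oppositeMode_oppositeMode _ _ _ _ _ _)] at h
    convert h using 3 with i i
    · rw [(V.op_linear_left _ _).map_add, map_add, LinearMap.add_apply, smul_add]
    · simp only [map_add, LinearMap.add_apply]
      module

/-! ### The adjoint modes on `W*` -/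

theorem dmode_eq_comp_oppositeMode (α : W.carrier →ₗ[ℂ] ℂ) (v : V.carrier) (n : ℤ) :
    W.dmode v n α = α ∘ₗ W.oppositeMode n v := by
  ext w
  let ev : Module.End ℂ W.carrier →ₗ[ℂ] ℂ := α ∘ₗ LinearMap.applyₗ w
  have h : ev (W.oppositeMode n v) = ∑ᶠ p : ℤ, ∑ᶠ k : ℕ,
      ev ((-1 : ℂ) ^ p • W.mode (2 * p - n - k - 2) (V.expL1 k (V.proj p v))) := by
    refine (map_finsum ev (W.hasFiniteSupport_finsum_mode_expL1_proj v n)).trans ?_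
    exact finsum_congr fun p ↦
      map_finsum ev (W.hasFiniteSupport_mode_expL1 (V.proj_mem p v) _ _)
  refine Eq.trans (finsum_congr fun p ↦ finsum_congr fun k ↦ ?_) h.symm
  simp only [VOA.expL1, divPow, LinearMap.smul_apply, map_smul, smul_eq_mul, Module.End.pow_apply,
    div_eq_mul_inv, mul_assoc]
  rfl

theorem dmode_apply (α : W.carrier →ₗ[ℂ] ℂ) (v : V.carrier) (n : ℤ) (w : W.carrier) :
    W.dmode v n α w = α (W.oppositeMode n v w) := by
  rw [dmode_eq_comp_oppositeMode]
  rfl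

theorem dmode_dmode_apply (α : W.carrier →ₗ[ℂ] ℂ) (u v : V.carrier) (m n : ℤ) (w : W.carrier) :
    W.dmode u m (W.dmode v n α) w = α (W.oppositeMode n v (W.oppositeMode m u w)) := by
  rw [dmode_eq_comp_oppositeMode, dmode_apply]
  rfl

theorem dmode_borcherds (α : W.carrier →ₗ[ℂ] ℂ) (u v : V.carrier) (l m n : ℤ) (w : W.carrier) :
    ∑ᶠ i : ℕ, cchoose m i * W.dmode (V.op u (l + i) v) (m + n - i) α w =
      ∑ᶠ i : ℕ, ((-1 : ℂ) ^ i * cchoose l i) *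
        (W.dmode u (l + m - i) (W.dmode v (n + i) α) w -
          (-1 : ℂ) ^ l * W.dmode v (l + n - i) (W.dmode u (m + i) α) w) := by
  have h := congrArg α (W.oppositeMode_borcherds u v l m n w)
  rw [map_finsum α (W.hasFiniteSupport_oppositeMode_op u v l m n w),
    map_finsum α (W.hasFiniteSupport_oppositeMode_oppositeMode u v l m n w)] at h
  simpa only [dmode_dmode_apply, dmode_apply, map_smul, map_sub, smul_eq_mul] using h

theorem dmode_dmode_sub_dmode_dmode (α : W.carrier →ₗ[ℂ] ℂ) (u v : V.carrier) (m n : ℤ)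
    (w : W.carrier) :
    W.dmode u m (W.dmode v n α) w - W.dmode v n (W.dmode u m α) w =
      ∑ᶠ i : ℕ, cchoose m i * W.dmode (V.op u i v) (m + n - i) α w := by
  have h := (W.dmode_borcherds α u v 0 m n w).trans (finsum_cchoose_zero_smul (M := ℂ) _)
  simpa using h.symm

theorem dmode_mem_DW (α : W.carrier →ₗ[ℂ] ℂ) (hα : ⇑α ∈ W.DW) (v : V.carrier) (n : ℤ) :
    W.dmode v n α ∈ W.DW := by
  refine ⟨?_, fun u ↦ ?_⟩
  · rw [dmode_eq_comp_oppositeMode]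
    exact (α ∘ₗ W.oppositeMode n v).isLinear
  obtain ⟨A, hA⟩ := V.trunc u v
  obtain ⟨B, hB⟩ := hα.2 u
  choose C hC using fun i : ℕ ↦ hα.2 (V.op u i v)
  obtain ⟨K, hK⟩ := ((range A.toNat).image C).bddAbove
  refine ⟨max B (K + A.toNat - n), fun m hm w ↦ ?_⟩
  have commutator_eq_zero : ∑ᶠ i : ℕ, cchoose m i * W.dmode (V.op u i v) (m + n - i) α w = 0 := by
    refine finsum_eq_zero_of_forall_eq_zero fun i ↦ ?_
    rcases lt_or_ge i A.toNat with hi | hi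
    · have hCK : C i ≤ K := hK (mem_coe.2 (mem_image_of_mem C (mem_range.2 hi)))
      rw [hC i _ (by lia), mul_zero]
    · rw [hA _ (by lia), dmode_apply, map_zero, LinearMap.zero_apply, map_zero, mul_zero]
  have dmode_eq_zero : W.dmode u m α = (0 : W.carrier →ₗ[ℂ] ℂ) :=
    funext (hB m ((le_max_left _ _).trans hm))
  rwa [← dmode_dmode_sub_dmode_dmode, dmode_eq_zero, dmode_apply, LinearMap.zero_apply,
    sub_zero] at commutator_eq_zero

end WeakModule

end

/-- `(D(W), Y*)` is a weak `V`-module: `D(W)` is stable under all the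
operators `v*ₙ`, the vacuum acts as the identity (`Y*(1,x) = id`), truncation holds by
definition, and the Jacobi identity (in Borcherds component form) holds for `Y*` on
`D(W)`.  Moreover `D(W)` is the maximal weak `V`-module inside `W*` with vertex
operator map `Y*`: any subset `M ⊆ W*` of linear functionals on which `Y*` is truncated
(as it must be for a weak module structure with vertex operator map `Y*`) is contained
in `D(W)`. -/
theorem DW_weak_module_and_maximal (V : VOA) (W : WeakModule V) :
    (∀ α ∈ W.DW, ∀ (v : V.carrier) (n : ℤ), W.dmode v n α ∈ W.DW) ∧
    (∀ α ∈ W.DW, ∀ (n : ℤ) (w : W.carrier),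
      W.dmode V.one n α w = if n = -1 then α w else 0) ∧
    (∀ α ∈ W.DW, ∀ (u v : V.carrier) (l m n : ℤ) (w : W.carrier),
      (∑ᶠ i : ℕ, cchoose m i * W.dmode (V.op u (l + (i : ℤ)) v) (m + n - (i : ℤ)) α w)
        = ∑ᶠ i : ℕ, ((-1 : ℂ) ^ i * cchoose l i) *
            (W.dmode u (l + m - (i : ℤ)) (W.dmode v (n + (i : ℤ)) α) w
              - ((-1 : ℂ) ^ l) *
                  W.dmode v (l + n - (i : ℤ)) (W.dmode u (m + (i : ℤ)) α) w)) ∧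
    (∀ M : Set (W.carrier → ℂ), (∀ α ∈ M, IsLinearMap ℂ α) →
      (∀ α ∈ M, ∀ v : V.carrier, ∃ N : ℤ, ∀ n : ℤ, N ≤ n →
        ∀ w : W.carrier, W.dmode v n α w = 0) →
      M ⊆ W.DW) := by
  have lift (α : W.carrier → ℂ) (hα : α ∈ W.DW) : ∃ β : W.carrier →ₗ[ℂ] ℂ, ⇑β = α :=
    ⟨IsLinearMap.mk' α hα.1, rfl⟩
  refine ⟨fun α hα v n ↦ ?_, fun α hα n w ↦ ?_, fun α hα u v l m n w ↦ ?_,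
    fun M linear truncated α hα ↦ ⟨linear α hα, truncated α hα⟩⟩
  all_goals obtain ⟨α, rfl⟩ := lift α hα
  · exact W.dmode_mem_DW α hα v n
  · rw [W.dmode_apply, W.oppositeMode_one_apply, apply_ite α, map_zero]
  · exact W.dmode_borcherds α u v l m n w
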